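/- Let G be a finite simple group and let H be a maximal proper subgroup of G which is cyclic. Then for every x ∈ G with x ∉ H, the intersection H ∩ x⁻¹Hx is the trivial subgroup; that is, H is malnormal in G. (Step in the proof of Theorem 5.11 showing G is a Frobenius group with respect to H.) -/

import Mathlib

/-!
Let `H` be an abelian maximal subgroup and `K` a conjugate of `H` by an element outside `H`.
Conjugates of maximal subgroups are maximal, so either `K = H`, in which case the normalizer of `H`
is larger than `H` and `H` is normal, or `H` and `K` generate the group. In the second case
`H ⊓ K` commutes with `H` and with `K`, hence is central, hence is a normal subgroup inside `H`.
Either way `H ⊓ K` is the normal core of `H`, which is trivial in a simple group.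
-/

section

variable {G : Type*} [Group G] {H K : Subgroup G}

theorem inf_le_center_of_sup_eq_top [IsMulCommutative H] [IsMulCommutative K] (h : H ⊔ K = ⊤) :
    H ⊓ K ≤ Subgroup.center G := by
  have hH : H ≤ Subgroup.centralizer (H ⊓ K : Subgroup G) :=
    H.le_centralizer.trans (Subgroup.centralizer_le inf_le_left)
  have hK : K ≤ Subgroup.centralizer (H ⊓ K : Subgroup G) :=
    K.le_centralizer.trans (Subgroup.centralizer_le inf_le_right)
  exact Subgroup.centralizer_eq_top_iff_subset.mp (top_le_iff.mp (h ▸ sup_le hH hK))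

theorem normal_of_le_center (h : H ≤ Subgroup.center G) : H.Normal :=
  Subgroup.normalizer_eq_top_iff.mp <| top_le_iff.mp <|
    Subgroup.centralizer_eq_top_iff_subset.mpr h ▸ Subgroup.centralizer_le_normalizer (H : Set G)

theorem normal_of_isCoatom_of_mem_normalizer {g : G} (hH : IsCoatom H) (hg : g ∉ H)
    (hnorm : g ∈ Subgroup.normalizer (H : Set G)) : H.Normal :=
  Subgroup.normalizer_eq_top_iff.mp <| hH.2 _ <|
    SetLike.lt_iff_le_and_exists.mpr ⟨Subgroup.le_normalizer, g, hnorm, hg⟩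

theorem sup_map_conj_eq_top_of_isCoatom {g : G} (hH : IsCoatom H) (hnormal : ¬ H.Normal)
    (hg : g ∉ H) : H ⊔ H.map (MulAut.conj g).toMonoidHom = ⊤ := by
  have hconj : IsCoatom (H.map (MulAut.conj g).toMonoidHom) :=
    ((MulAut.conj g).mapSubgroup.isCoatom_iff H).mpr hH
  have hne : H ≠ H.map (MulAut.conj g).toMonoidHom := fun h =>
    hnormal <| normal_of_isCoatom_of_mem_normalizer hH hg <|
      Subgroup.mem_normalizer_iff_map_conj_eq.mpr h.symm
  exact hH.sup_eq_top_of_ne hconj hne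

theorem normalCore_le_map_conj (H : Subgroup G) (g : G) :
    H.normalCore ≤ H.map (MulAut.conj g).toMonoidHom :=
  H.normalCore_eq_iInf_map_conj.trans_le (iInf_le _ g)

theorem normalCore_eq_bot_of_ne_top [IsSimpleGroup G] (hH : H ≠ ⊤) : H.normalCore = ⊥ :=
  H.normalCore_normal.eq_bot_or_eq_top.resolve_right (ne_top_of_le_ne_top hH H.normalCore_le)

end

theorem frobenius_step_malnormal_general {G : Type*} [Group G] (H : Subgroup G)
    [IsMulCommutative H] (hmax : IsCoatom H) (x : G) (hx : x ∉ H) :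
    H ⊓ Subgroup.map ((MulAut.conj x⁻¹).toMonoidHom) H = H.normalCore := by
  by_cases hnormal : H.Normal
  · rw [H.normalCore_eq_self, inf_eq_left]
    exact (Subgroup.Normal.map_conj_eq H x⁻¹).ge
  · have hsup : H ⊔ H.map (MulAut.conj x⁻¹).toMonoidHom = ⊤ :=
      sup_map_conj_eq_top_of_isCoatom hmax hnormal (inv_mem_iff.not.mpr hx)
    have hinf : (H ⊓ H.map (MulAut.conj x⁻¹).toMonoidHom).Normal :=
      normal_of_le_center (inf_le_center_of_sup_eq_top hsup)
    exact le_antisymm (Subgroup.normal_le_normalCore.mpr inf_le_left)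
      (le_inf H.normalCore_le (normalCore_le_map_conj H x⁻¹))

/-- Let `G` be a finite simple group and `H` a maximal proper subgroup of `G` which is
cyclic. Then for every `x ∈ G` with `x ∉ H`, the intersection `H ⊓ x⁻¹Hx` is trivial,
i.e. `H` is malnormal in `G`. -/
theorem frobenius_step_malnormal {G : Type*} [Group G] [Finite G] [IsSimpleGroup G]
    (H : Subgroup G) (hmax : IsCoatom H) (hcyc : IsCyclic H) (x : G) (hx : x ∉ H) :
    H ⊓ Subgroup.map ((MulAut.conj x⁻¹).toMonoidHom) H = ⊥ := by
  rw [frobenius_step_malnormal_general H hmax x hx, normalCore_eq_bot_of_ne_top hmax.1]
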